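/- arXiv:2406.07183 — 2 statements merged into one kernel-verified Lean document; each statement's English description precedes it below -/
import Mathlib

section
/- Let G₁ and G₂ be r-regular graphs on the same number n of vertices whose adjacency matrices have the same characteristic polynomial (A-cospectral regular graphs), and let H be an arbitrary finite simple graph. Then for every α ∈ [0,1], the graphs G₁ ⊛ H and G₂ ⊛ H are A_α-cospectral, i.e., A_α(G₁ ⊛ H) and A_α(G₂ ⊛ H) have the same characteristic polynomial. -/
/-!
For an `r`-regular graph `G`, the characteristic polynomial of `A_α(G ⊛ H)` depends on `G` only
through `|V|`, `|E|`, `r` and the characteristic polynomial of `A = adjMat G`.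

Write `c = 1 - α` and let `N` be the vertex-edge incidence matrix. Regularity gives `N Nᵀ = A + r`,
the line graph has adjacency matrix `Nᵀ N - 2`, and all degrees in `G ⊛ H` are explicit
(`degree_totalCorona`), so that `x - A_α(G ⊛ H)` has the block form of `charmatrix_totalCorona`:

* the block of the pendant copies is `1 ⊗ K` with `K` depending only on `H`, `α`, `x`. When `K` is
  invertible, its Schur complement only subtracts a scalar from the `V × V` block
  (`det_coronaBlock`), namely `c²` times the sum of the entries of `K⁻¹`;
* in the remaining block over `V ⊕ E`, subtracting `Nᵀ` times the `V`-rows from the `E`-rows turns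
  the `E × E` block into a scalar `t`. If `t ≠ 0`, the Schur complement of that scalar block is a
  quadratic polynomial in `A`, since `N` now enters only through `N Nᵀ` (`det_totalBlock`).

The determinant of a polynomial in `A` is determined by the characteristic polynomial of `A`
(`det_aeval_eq_of_charpoly_eq`), and `2 |E| = r |V|`. Hence the two characteristic polynomials agree
at every `x` with `t ≠ 0` and `det K ≠ 0`. Both conditions say that `x` is not a root of a fixed
nonzero polynomial, so the characteristic polynomials are equal.
-/

open Matrix BigOperators

attribute [local instance] Classical.propDecidable

noncomputable section

namespace AalphaSpectra

/-- The adjacency matrix (over `ℝ`) of a simple graph. -/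
def adjMat {V : Type*} [Fintype V] (G : SimpleGraph V) : Matrix V V ℝ :=
  Matrix.of fun i j => if G.Adj i j then (1 : ℝ) else 0

/-- The diagonal degree matrix (over `ℝ`) of a simple graph. -/
def degMat {V : Type*} [Fintype V] (G : SimpleGraph V) : Matrix V V ℝ :=
  Matrix.diagonal fun i => ((G.neighborSet i).ncard : ℝ)

/-- The `A_α`-matrix `A_α(G) = α·D(G) + (1 - α)·A(G)` of a simple graph. -/
def AMat {V : Type*} [Fintype V] (G : SimpleGraph V) (a : ℝ) : Matrix V V ℝ :=
  a • degMat G + (1 - a) • adjMat G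

/-- The characteristic polynomial `φ(M, x) = det(x·I − M)` of a square matrix,
evaluated at `x`. -/
def charPolyAt {n : Type*} [Fintype n] (M : Matrix n n ℝ) (x : ℝ) : ℝ :=
  letI := Classical.decEq n
  (x • (1 : Matrix n n ℝ) - M).det

/-- The `M`-coronal `Γ_M(x) = 1ᵀ (x·I − M)⁻¹ 1`, the sum of all entries of
`(x·I − M)⁻¹`. -/
def coronal {n : Type*} [Fintype n] (M : Matrix n n ℝ) (x : ℝ) : ℝ :=
  letI := Classical.decEq n
  ∑ i, ∑ j, (x • (1 : Matrix n n ℝ) - M)⁻¹ i j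

/-- `G` is `r`-regular: every vertex has exactly `r` neighbours. -/
def IsRegularOfDeg {V : Type*} [Fintype V] (G : SimpleGraph V) (r : ℕ) : Prop :=
  ∀ v : V, (G.neighborSet v).ncard = r

/-- The total corona `G₁ ⊛ G₂`: take the total graph `T(G₁)` (on `V(G₁) ⊕ E(G₁)`)
together with one copy of `G₂` for every vertex of `G₁`, and join the `i`-th
vertex of `G₁` to every vertex of the `i`-th copy of `G₂`. -/
def totalCorona {V₁ V₂ : Type*} (G₁ : SimpleGraph V₁) (G₂ : SimpleGraph V₂) :
    SimpleGraph (V₁ ⊕ (↥G₁.edgeSet ⊕ V₁ × V₂)) :=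
  SimpleGraph.fromRel fun a b =>
    match a, b with
    | Sum.inl v, Sum.inl w => G₁.Adj v w
    | Sum.inl v, Sum.inr (Sum.inl e) => v ∈ (e : Sym2 V₁)
    | Sum.inr (Sum.inl e), Sum.inr (Sum.inl e') =>
        e ≠ e' ∧ ∃ v, v ∈ (e : Sym2 V₁) ∧ v ∈ (e' : Sym2 V₁)
    | Sum.inl v, Sum.inr (Sum.inr p) => v = p.1
    | Sum.inr (Sum.inr p), Sum.inr (Sum.inr q) => p.1 = q.1 ∧ G₂.Adj p.2 q.2
    | _, _ => False

/-! ### Determinants of polynomials in a matrix -/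

open Polynomial in
theorem ofReal_det_aeval {V : Type*} [Fintype V] [DecidableEq V] (M : Matrix V V ℝ) (p : ℝ[X]) :
    Complex.ofRealHom (aeval M p).det
      = (aeval (M.map Complex.ofRealHom) (p.map Complex.ofRealHom)).det := by
  rw [RingHom.map_det]
  congr 1
  change Complex.ofRealHom.mapMatrix (aeval M p) = aeval (Complex.ofRealHom.mapMatrix M) _
  rw [aeval_def, aeval_def, eval₂_map, hom_eval₂]
  congr 1
  ext a i j
  by_cases hij : i = j <;> simp [Matrix.algebraMap_matrix_apply, hij]

open Polynomial in
/-- The determinant of `p(A)` depends only on the characteristic polynomial of `A`: over `ℂ` the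
polynomial `p` splits, and each `det (A - a)` is up to sign a value of that polynomial. -/
theorem det_aeval_eq_of_charpoly_eq {V₁ V₂ : Type*} [Fintype V₁] [Fintype V₂]
    [DecidableEq V₁] [DecidableEq V₂] (A : Matrix V₁ V₁ ℝ) (B : Matrix V₂ V₂ ℝ)
    (h : A.charpoly = B.charpoly) (p : ℝ[X]) : (aeval A p).det = (aeval B p).det := by
  have hcard : Fintype.card V₁ = Fintype.card V₂ := by
    rw [← A.charpoly_natDegree_eq_dim, h, B.charpoly_natDegree_eq_dim]
  have key : ∀ (A' : Matrix V₁ V₁ ℂ) (B' : Matrix V₂ V₂ ℂ), A'.charpoly = B'.charpoly →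
      ∀ q : ℂ[X], (aeval A' q).det = (aeval B' q).det := by
    intro A' B' h' q
    have hprod : ∀ s : Multiset ℂ, (aeval A' (s.map fun a => X - C a).prod).det
        = (aeval B' (s.map fun a => X - C a).prod).det := by
      intro s
      induction s using Multiset.induction with
      | empty => simp
      | cons a s ih =>
        have hA : (aeval A' (X - C a)).det = (-1) ^ Fintype.card V₁ * A'.charpoly.eval a := by
          rw [Matrix.eval_charpoly, ← Matrix.det_neg]
          simp [Matrix.algebraMap_eq_diagonal, Matrix.scalar_apply, Pi.algebraMap_def]
        have hB : (aeval B' (X - C a)).det = (-1) ^ Fintype.card V₂ * B'.charpoly.eval a := by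
          rw [Matrix.eval_charpoly, ← Matrix.det_neg]
          simp [Matrix.algebraMap_eq_diagonal, Matrix.scalar_apply, Pi.algebraMap_def]
        rw [Multiset.map_cons, Multiset.prod_cons, map_mul, map_mul, Matrix.det_mul,
          Matrix.det_mul, ih, hA, hB, h', hcard]
    rw [(IsAlgClosed.splits q).eq_prod_roots, map_mul, map_mul, Matrix.det_mul, Matrix.det_mul,
      hprod]
    simp [Matrix.algebraMap_eq_diagonal, Pi.algebraMap_def, Matrix.det_diagonal, hcard]
  apply Complex.ofRealHom.injective
  rw [ofReal_det_aeval, ofReal_det_aeval]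
  apply key
  rw [Matrix.charpoly_map, Matrix.charpoly_map, h]

/-! ### Schur complements of the block matrices -/

open Polynomial in
/-- The quadratic polynomial `P - (c / t) (X + r) (c + P)` with `P = q - c X`. Its value at an
adjacency matrix is the Schur complement left after the edges have been eliminated. -/
def schurPoly (r q c t : ℝ) : ℝ[X] :=
  (C q - C c * X) - C (c / t) * ((X + C r) * (C c + (C q - C c * X)))

/-- Elimination of the edges: `N` survives only through `N * Nᵀ`, which is a polynomial in `A`. -/
theorem det_totalBlock {V E : Type*} [Fintype V] [Fintype E] [DecidableEq V] [DecidableEq E]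
    (A : Matrix V V ℝ) (N : Matrix V E ℝ) (r q c t : ℝ) (ht : t ≠ 0)
    (hN : N * Nᵀ = A + r • 1) :
    (fromBlocks (q • 1 - c • A) (-(c • N)) (-(c • Nᵀ)) (t • 1 - c • (Nᵀ * N))).det
      = t ^ Fintype.card E * (Polynomial.aeval A (schurPoly r q c t)).det := by
  set P : Matrix V V ℝ := q • 1 - c • A with hP
  have hinv : IsUnit (t • (1 : Matrix E E ℝ)).det := by
    simp [ht]
  let _ : Invertible (t • (1 : Matrix E E ℝ)) := Matrix.invertibleOfIsUnitDet _ hinv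
  have hi : ⅟(t • (1 : Matrix E E ℝ)) = t⁻¹ • 1 := by
    apply invOf_eq_right_inv
    simp [smul_smul, ht]
  -- Subtracting `Nᵀ` times the first block row leaves a scalar lower right block.
  have h1 : fromBlocks (1 : Matrix V V ℝ) 0 (-Nᵀ) 1 *
      fromBlocks P (-(c • N)) (-(c • Nᵀ)) (t • 1 - c • (Nᵀ * N))
      = fromBlocks P (-(c • N)) (-(c • Nᵀ) - Nᵀ * P) (t • 1) := by
    rw [fromBlocks_multiply]
    congr 1
    · simp
    · simp
    · simp; abel
    · simp
  have h2 := congrArg Matrix.det h1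
  rw [Matrix.det_mul, det_fromBlocks_zero₁₂, det_one, det_one, one_mul, one_mul,
    det_fromBlocks₂₂ _ _ _ (t • (1 : Matrix E E ℝ)), hi, Matrix.det_smul, det_one, mul_one] at h2
  rw [h2]
  congr 2
  have h3 : -(c • N) * t⁻¹ • (1 : Matrix E E ℝ) * (-(c • Nᵀ) - Nᵀ * P)
      = (c / t) • ((N * Nᵀ) * (c • 1 + P)) := by
    simp only [Matrix.mul_add, Matrix.mul_sub, Matrix.mul_neg, Matrix.neg_mul, Matrix.smul_mul,
      Matrix.mul_smul, Matrix.mul_one, Matrix.mul_assoc, smul_add, smul_smul, smul_neg,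
      sub_neg_eq_add, neg_neg, div_eq_mul_inv]
    module
  rw [h3, hN]
  simp [schurPoly, hP, Algebra.algebraMap_eq_smul_one]

/-- The adjacency between base vertices and pendant copies: `v` is joined to the vertices `(v, w)`
of its own copy. -/
def copyInc (V W : Type*) : Matrix V (V × W) ℝ :=
  Matrix.of fun v p => if v = p.1 then 1 else 0

open Kronecker in
/-- Eliminating the pendant copies replaces the scalar `s` by `s - c² Γ`, where `Γ` is the coronal
`1ᵀ K⁻¹ 1`; the edges are then eliminated by `det_totalBlock`. -/
theorem det_coronaBlock {V E W : Type*} [Fintype V] [Fintype E] [Fintype W]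
    [DecidableEq V] [DecidableEq E] [DecidableEq W]
    (A : Matrix V V ℝ) (N : Matrix V E ℝ) (K : Matrix W W ℝ) (r s c t : ℝ) (ht : t ≠ 0)
    (hK : K.det ≠ 0) (hN : N * Nᵀ = A + r • 1) :
    (fromBlocks
      (fromBlocks (s • 1 - c • A) (-(c • N)) (-(c • Nᵀ)) (t • 1 - c • (Nᵀ * N)))
      (fromRows (-(c • copyInc V W)) 0) (fromCols (-(c • (copyInc V W)ᵀ)) 0)
      ((1 : Matrix V V ℝ) ⊗ₖ K)).det
    = K.det ^ Fintype.card V * (t ^ Fintype.card E * (Polynomial.aeval A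
          (schurPoly r (s - c ^ 2 * ∑ i, ∑ j, K⁻¹ i j) c t)).det) := by
  rw [← det_totalBlock A N r _ c t ht hN]
  set Γ := ∑ i, ∑ j, K⁻¹ i j with hΓ
  have hu : IsUnit ((1 : Matrix V V ℝ) ⊗ₖ K).det := by
    rw [Matrix.det_kronecker]; simp [hK]
  let _ : Invertible ((1 : Matrix V V ℝ) ⊗ₖ K) := Matrix.invertibleOfIsUnitDet _ hu
  -- Each pendant copy touches a single base vertex, so eliminating it contributes a scalar.
  have hJ : copyInc V W * ((1 : Matrix V V ℝ) ⊗ₖ K⁻¹) * (copyInc V W)ᵀ = Γ • 1 := by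
    ext u v
    simp only [Matrix.mul_apply, copyInc, Matrix.of_apply, Matrix.transpose_apply,
      Matrix.kroneckerMap_apply, Fintype.sum_prod_type, Matrix.smul_apply, Matrix.one_apply,
      ite_mul, mul_ite, one_mul, zero_mul, mul_one, mul_zero, smul_eq_mul]
    by_cases huv : u = v
    · subst huv
      simp [Finset.sum_ite_irrel, hΓ]
      exact Finset.sum_comm
    · simp [Finset.sum_ite_irrel, huv]
  rw [det_fromBlocks₂₂, Matrix.invOf_eq_nonsing_inv, Matrix.inv_kronecker, inv_one,
    Matrix.det_kronecker]
  simp only [det_one, one_pow, one_mul]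
  congr 2
  rw [fromRows_mul, fromRows_mul_fromCols]
  simp only [Matrix.zero_mul, Matrix.mul_zero, Matrix.neg_mul, Matrix.mul_neg, neg_neg,
    Matrix.smul_mul, Matrix.mul_smul, hJ, sub_eq_add_neg, fromBlocks_neg, fromBlocks_add]
  congr 1
  · module
  · simp
  · simp
  · simp

/-! ### The incidence matrix of a regular graph -/

/-- The vertex-edge incidence matrix of `G`, with columns indexed by the edges only. -/
def edgeInc {V : Type*} (G : SimpleGraph V) : Matrix V G.edgeSet ℝ :=
  Matrix.of fun v e => if v ∈ (e : Sym2 V) then 1 else 0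

theorem edgeInc_eq {V : Type*} (G : SimpleGraph V) (v : V) (e : G.edgeSet) :
    edgeInc G v e = G.incMatrix ℝ v e := by
  simp [edgeInc, SimpleGraph.incMatrix_apply', SimpleGraph.incidenceSet, e.2]

theorem edgeInc_mul_self {V : Type*} (G : SimpleGraph V) (v : V) (e : G.edgeSet) :
    edgeInc G v e * edgeInc G v e = edgeInc G v e := by
  by_cases h : v ∈ (e : Sym2 V) <;> simp [edgeInc, h]

theorem ncard_neighborSet {V : Type*} [Fintype V] (G : SimpleGraph V) (v : V) :
    ((G.neighborSet v).ncard : ℝ) = ∑ w, adjMat G v w := by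
  simp only [adjMat, Matrix.of_apply, Finset.sum_boole]
  rw [← Set.ncard_coe_finset]
  congr 2
  ext w
  simp

theorem edgeInc_mul_transpose {V : Type*} [Fintype V] (G : SimpleGraph V) [Fintype G.edgeSet]
    {r : ℕ} (hr : IsRegularOfDeg G r) :
    edgeInc G * (edgeInc G)ᵀ = adjMat G + (r : ℝ) • 1 := by
  have h := G.incMatrix_mul_transpose (R := ℝ)
  ext u v
  have huv := congrFun (congrFun h u) v
  have hsum : (edgeInc G * (edgeInc G)ᵀ) u v
      = (G.incMatrix ℝ * (G.incMatrix ℝ)ᵀ) u v := by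
    simp only [Matrix.mul_apply, Matrix.transpose_apply, edgeInc_eq]
    rw [← Finset.sum_subtype G.edgeFinset (fun _ => SimpleGraph.mem_edgeFinset)
      (fun e => G.incMatrix ℝ u e * G.incMatrix ℝ v e)]
    refine Finset.sum_subset (Finset.subset_univ _) fun e _ he => ?_
    rw [G.incMatrix_of_notMem_incidenceSet fun h => he (SimpleGraph.mem_edgeFinset.2 h.1),
      zero_mul]
  rw [hsum, huv]
  have hd : (G.degree u : ℝ) = r := by
    rw [← hr u, ← SimpleGraph.card_neighborSet_eq_degree, Set.ncard_eq_toFinset_card']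
    simp
  by_cases e : u = v
  · subst e
    simp [adjMat, hd]
  · simp [adjMat, e]

theorem edgeInc_col_sum {V : Type*} [Fintype V] (G : SimpleGraph V) (e : G.edgeSet) :
    ∑ v, edgeInc G v e = 2 := by
  simp only [edgeInc_eq]
  exact G.sum_incMatrix_apply_of_mem_edgeSet e.2

theorem edgeInc_row_sum {V : Type*} [Fintype V] (G : SimpleGraph V) [Fintype G.edgeSet]
    {r : ℕ} (hr : IsRegularOfDeg G r) (v : V) : ∑ e, edgeInc G v e = r := by
  have h := congrFun (congrFun (edgeInc_mul_transpose G hr) v) v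
  simpa only [Matrix.mul_apply, Matrix.transpose_apply, edgeInc_mul_self, Matrix.add_apply,
    Matrix.smul_apply, Matrix.one_apply_eq, adjMat, Matrix.of_apply, G.loopless.irrefl v, if_false,
    zero_add, smul_eq_mul, mul_one] using h

theorem two_mul_card_edgeSet {V : Type*} [Fintype V] (G : SimpleGraph V) [Fintype G.edgeSet]
    {r : ℕ} (hr : IsRegularOfDeg G r) :
    (2 : ℝ) * Fintype.card G.edgeSet = r * Fintype.card V := by
  have h := Finset.sum_comm (s := Finset.univ) (t := Finset.univ) (f := edgeInc G)
  simp only [edgeInc_row_sum G hr, edgeInc_col_sum, Finset.sum_const, nsmul_eq_mul] at h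
  simp only [Finset.card_univ] at h
  linarith

/-- `Nᵀ N` is `2` plus the adjacency matrix of the line graph: distinct edges share at most one
vertex. -/
theorem transpose_mul_edgeInc {V : Type*} [Fintype V] (G : SimpleGraph V) (e e' : G.edgeSet) :
    ((edgeInc G)ᵀ * edgeInc G) e e' = 2 * (1 : Matrix _ _ ℝ) e e' +
      if e ≠ e' ∧ ∃ v, v ∈ (e : Sym2 V) ∧ v ∈ (e' : Sym2 V) then 1 else 0 := by
  by_cases h : e = e'
  · subst h
    simp [Matrix.mul_apply, edgeInc_mul_self, edgeInc_col_sum G e]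
  · by_cases hv : ∃ v, v ∈ (e : Sym2 V) ∧ v ∈ (e' : Sym2 V)
    · obtain ⟨v, h1, h2⟩ := hv
      rw [if_pos ⟨h, v, h1, h2⟩, Matrix.mul_apply, Finset.sum_eq_single v]
      · simp [edgeInc, h1, h2, h]
      · intro w _ hw
        by_contra hne
        have hw1 : w ∈ (e : Sym2 V) := by
          by_contra hc; exact hne (by simp [edgeInc, hc])
        have hw2 : w ∈ (e' : Sym2 V) := by
          by_contra hc; exact hne (by simp [edgeInc, hc])
        apply h
        apply Subtype.ext
        rw [(Sym2.mem_and_mem_iff hw).1 ⟨hw1, h1⟩, (Sym2.mem_and_mem_iff hw).1 ⟨hw2, h2⟩]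
      · simp
    · rw [if_neg (fun hc => hv hc.2), Matrix.mul_apply, Finset.sum_eq_zero]
      · simp [h]
      · intro w _
        by_cases h1 : w ∈ (e : Sym2 V)
        · have h2 : w ∉ (e' : Sym2 V) := fun h2 => hv ⟨w, h1, h2⟩
          simp [edgeInc, h2]
        · simp [edgeInc, h1]

/-! ### The total corona as a block matrix -/

open Kronecker in
/-- The adjacency matrix of the total corona, in blocks indexed by `(V ⊕ E) ⊕ V × W`. -/
theorem adjMat_totalCorona {V W : Type*} [Fintype V] [Fintype W]
    (G : SimpleGraph V) (H : SimpleGraph W) [Fintype G.edgeSet] :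
    (adjMat (totalCorona G H)).submatrix (Equiv.sumAssoc _ _ _) (Equiv.sumAssoc _ _ _) =
      fromBlocks
        (fromBlocks (adjMat G) (edgeInc G) (edgeInc G)ᵀ ((edgeInc G)ᵀ * edgeInc G - (2 : ℝ) • 1))
        (fromRows (copyInc V W) 0) (fromCols (copyInc V W)ᵀ 0)
        ((1 : Matrix V V ℝ) ⊗ₖ adjMat H) := by
  ext i j
  rcases i with (v | e) | ⟨v, w⟩ <;> rcases j with (v' | e') | ⟨v', w'⟩
  · have : G.Adj v v' → v ≠ v' := fun h => h.ne
    simp [adjMat, totalCorona, G.adj_comm v' v]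
    grind
  · simp [adjMat, totalCorona, edgeInc]
  · simp [adjMat, totalCorona, copyInc]
  · simp [adjMat, totalCorona, edgeInc]
  · have hs : (∃ v ∈ (e' : Sym2 V), v ∈ (e : Sym2 V)) ↔ ∃ v ∈ (e : Sym2 V), v ∈ (e' : Sym2 V) := by
      simp only [and_comm]
    by_cases h : e = e'
    · simp [adjMat, totalCorona, transpose_mul_edgeInc, h]
    · simp [adjMat, totalCorona, transpose_mul_edgeInc, hs, h, Ne.symm h]
  · simp [adjMat, totalCorona]
  · simp [adjMat, totalCorona, copyInc]
  · simp [adjMat, totalCorona]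
  · have : H.Adj w w' → w ≠ w' := fun h => h.ne
    simp [adjMat, totalCorona, H.adj_comm w' w, Matrix.one_apply, Matrix.kroneckerMap_apply]
    grind


/-- Degrees in the total corona of an `r`-regular graph: `2r + |W|` on base vertices, `2r` on edges,
and one more than the degree in `H` on pendant vertices. -/
theorem degree_totalCorona {V W : Type*} [Fintype V] [Fintype W]
    (G : SimpleGraph V) (H : SimpleGraph W) [Fintype G.edgeSet] {r : ℕ}
    (hr : IsRegularOfDeg G r) (i : (V ⊕ G.edgeSet) ⊕ V × W) :
    (((totalCorona G H).neighborSet (Equiv.sumAssoc _ _ _ i)).ncard : ℝ) =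
      Sum.elim (Sum.elim (fun _ => 2 * (r : ℝ) + Fintype.card W) (fun _ => 2 * (r : ℝ)))
        (fun p => (H.neighborSet p.2).ncard + 1) i := by
  have h := fun j => congrFun (congrFun (adjMat_totalCorona G H) i) j
  simp only [Matrix.submatrix_apply] at h
  rw [ncard_neighborSet, ← Equiv.sum_comp (Equiv.sumAssoc V G.edgeSet (V × W))]
  simp only [h]
  rcases i with (v | e) | ⟨v, w⟩
  · have h1 : ∑ w, adjMat G v w = r := by rw [← ncard_neighborSet, hr v]
    simp only [Fintype.sum_sum_type, fromBlocks_apply₁₁, fromBlocks_apply₁₂, fromRows_apply_inl,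
      h1, edgeInc_row_sum G hr, Sum.elim_inl]
    simp only [copyInc, Matrix.of_apply, Fintype.sum_prod_type]
    have h2 : ∑ v', ∑ _w : W, (if v = v' then (1 : ℝ) else 0) = Fintype.card W := by
      rw [Finset.sum_comm]
      simp
    rw [h2]
    ring
  · have h1 : ∑ e', ((edgeInc G)ᵀ * edgeInc G) e e' = 2 * r := by
      simp only [Matrix.mul_apply, Matrix.transpose_apply]
      rw [Finset.sum_comm]
      simp only [← Finset.mul_sum, edgeInc_row_sum G hr, ← Finset.sum_mul, edgeInc_col_sum]
    simp only [Fintype.sum_sum_type, fromBlocks_apply₁₁, fromBlocks_apply₁₂, fromBlocks_apply₂₁,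
      fromBlocks_apply₂₂, fromRows_apply_inr, Matrix.transpose_apply, edgeInc_col_sum,
      Matrix.sub_apply, Finset.sum_sub_distrib, h1, Sum.elim_inl, Sum.elim_inr, Matrix.smul_apply,
      Matrix.zero_apply, Matrix.one_apply]
    simp
  · simp only [Fintype.sum_sum_type, fromBlocks_apply₂₁, fromBlocks_apply₂₂, fromCols_apply_inl,
      fromCols_apply_inr, Matrix.transpose_apply, Matrix.zero_apply, Sum.elim_inr,
      Matrix.kroneckerMap_apply, Fintype.sum_prod_type]
    simp [copyInc, Matrix.one_apply, ncard_neighborSet]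
    ring

/-- The diagonal block of `A_α(G ⊛ H)` on one pendant copy of `H`; the `+ 1` counts the edge to the
base vertex. -/
def pendantMat {W : Type*} [Fintype W] (H : SimpleGraph W) (a : ℝ) : Matrix W W ℝ :=
  a • (degMat H + 1) + (1 - a) • adjMat H

open Kronecker in
/-- `x - A_α(G ⊛ H)` has the shape treated in `det_coronaBlock`. -/
theorem charmatrix_totalCorona {V W : Type*} [Fintype V] [Fintype W]
    (G : SimpleGraph V) (H : SimpleGraph W) [Fintype G.edgeSet] {r : ℕ}
    (hr : IsRegularOfDeg G r) (a x : ℝ) :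
    (x • 1 - AMat (totalCorona G H) a).submatrix (Equiv.sumAssoc _ _ _) (Equiv.sumAssoc _ _ _) =
    fromBlocks
      (fromBlocks ((x - a * (2 * r + Fintype.card W)) • 1 - (1 - a) • adjMat G)
        (-((1 - a) • edgeInc G)) (-((1 - a) • (edgeInc G)ᵀ))
        ((x - (2 * r * a - 2 * (1 - a))) • 1 - (1 - a) • ((edgeInc G)ᵀ * edgeInc G)))
      (fromRows (-((1 - a) • copyInc V W)) 0) (fromCols (-((1 - a) • (copyInc V W)ᵀ)) 0)
      ((1 : Matrix V V ℝ) ⊗ₖ (x • 1 - pendantMat H a)) := by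
  ext i j
  have hA := congrFun (congrFun (adjMat_totalCorona G H) i) j
  have hD := degree_totalCorona G H hr i
  simp only [Matrix.submatrix_apply] at hA
  simp only [Matrix.submatrix_apply, AMat, degMat, Matrix.sub_apply, Matrix.add_apply,
    Matrix.smul_apply, hA, Matrix.diagonal_apply, hD, Matrix.one_apply, smul_eq_mul,
    EmbeddingLike.apply_eq_iff_eq]
  rcases i with (v | e) | ⟨v, w⟩ <;> rcases j with (v' | e') | ⟨v', w'⟩
  · by_cases h : v = v' <;> simp [h]; ring
  · simp
  · simp
  · simp
  · by_cases h : e = e' <;> simp [h, Matrix.smul_apply]; ring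
  · simp
  · simp
  · simp
  · by_cases h : v = v' <;> by_cases h' : w = w' <;>
      simp [h, h', pendantMat, degMat, Matrix.kroneckerMap_apply] ; ring

/-! ### Characteristic polynomials -/

theorem charPolyAt_eq_det {V : Type*} [Fintype V] [DecidableEq V] (M : Matrix V V ℝ) (x : ℝ) :
    charPolyAt M x = (x • 1 - M).det := by
  unfold charPolyAt
  congr!

theorem charPolyAt_eq_eval {V : Type*} [Fintype V] [DecidableEq V] (M : Matrix V V ℝ) (x : ℝ) :
    charPolyAt M x = M.charpoly.eval x := by
  rw [charPolyAt_eq_det, Matrix.eval_charpoly, Matrix.smul_one_eq_diagonal, Matrix.scalar_apply]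

/-- Away from finitely many `x`, the characteristic polynomial of `A_α(G ⊛ H)` in terms of `|V|`,
`|E|` and a polynomial in `adjMat G` whose coefficients depend only on `r`, `H`, `a` and `x`. -/
theorem charPolyAt_totalCorona {V W : Type*} [Fintype V] [Fintype W]
    (G : SimpleGraph V) (H : SimpleGraph W) [Fintype G.edgeSet] {r : ℕ}
    (hr : IsRegularOfDeg G r) (a x : ℝ) (ht : x - (2 * r * a - 2 * (1 - a)) ≠ 0)
    (hK : (x • 1 - pendantMat H a).det ≠ 0) :
    charPolyAt (AMat (totalCorona G H) a) x =
      (x • 1 - pendantMat H a).det ^ Fintype.card V *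
        ((x - (2 * r * a - 2 * (1 - a))) ^ Fintype.card G.edgeSet *
          (Polynomial.aeval (adjMat G) (schurPoly r (x - a * (2 * r + Fintype.card W) -
            (1 - a) ^ 2 * ∑ i, ∑ j, (x • 1 - pendantMat H a)⁻¹ i j) (1 - a)
            (x - (2 * r * a - 2 * (1 - a))))).det) := by
  have h := congrArg Matrix.det (charmatrix_totalCorona G H hr a x)
  rw [det_coronaBlock _ _ _ r _ _ _ ht hK (edgeInc_mul_transpose G hr),
    Matrix.det_submatrix_equiv_self] at h
  rw [charPolyAt_eq_det, h]

theorem totalCorona_cospectral_of_cospectral_regular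
    {V₁ V₂ W : Type*} [Fintype V₁] [Fintype V₂] [Fintype W]
    (G₁ : SimpleGraph V₁) (G₂ : SimpleGraph V₂) (H : SimpleGraph W)
    [Fintype ↥G₁.edgeSet] [Fintype ↥G₂.edgeSet]
    (n r : ℕ)
    (hn₁ : Fintype.card V₁ = n) (hn₂ : Fintype.card V₂ = n)
    (hreg₁ : IsRegularOfDeg G₁ r) (hreg₂ : IsRegularOfDeg G₂ r)
    (hcosp : ∀ x : ℝ, charPolyAt (adjMat G₁) x = charPolyAt (adjMat G₂) x)
    (α : ℝ) (hα : α ∈ Set.Icc (0 : ℝ) 1) :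
    ∀ x : ℝ, charPolyAt (AMat (totalCorona G₁ H) α) x =
      charPolyAt (AMat (totalCorona G₂ H) α) x := by
  have hchar : (adjMat G₁).charpoly = (adjMat G₂).charpoly :=
    Polynomial.funext fun x => by rw [← charPolyAt_eq_eval, ← charPolyAt_eq_eval, hcosp]
  have hE : Fintype.card G₁.edgeSet = Fintype.card G₂.edgeSet := by
    have h₁ := two_mul_card_edgeSet G₁ hreg₁
    have h₂ := two_mul_card_edgeSet G₂ hreg₂
    rw [hn₁] at h₁
    rw [hn₂] at h₂
    exact_mod_cast (by linarith : (Fintype.card G₁.edgeSet : ℝ) = Fintype.card G₂.edgeSet)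
  set t₀ : ℝ := 2 * r * α - 2 * (1 - α)
  -- The closed form needs `x` to avoid the roots of `Q`; multiplying by it and
  -- cancelling afterwards removes the restriction.
  obtain ⟨Q, hQ⟩ : ∃ Q : Polynomial ℝ,
      Q = (Polynomial.X - Polynomial.C t₀) * (pendantMat H α).charpoly := ⟨_, rfl⟩
  have hQ0 : Q ≠ 0 :=
    hQ ▸ ((Polynomial.monic_X_sub_C t₀).mul (pendantMat H α).charpoly_monic).ne_zero
  have hpoly : (AMat (totalCorona G₁ H) α).charpoly = (AMat (totalCorona G₂ H) α).charpoly := by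
    apply mul_right_cancel₀ hQ0
    apply Polynomial.funext
    intro x
    rw [Polynomial.eval_mul, Polynomial.eval_mul]
    by_cases hx : Q.eval x = 0
    · rw [hx, mul_zero, mul_zero]
    · congr 1
      rw [hQ, Polynomial.eval_mul, ← charPolyAt_eq_eval, charPolyAt_eq_det] at hx
      have ht : x - t₀ ≠ 0 := by simpa using left_ne_zero_of_mul hx
      have hK := right_ne_zero_of_mul hx
      rw [← charPolyAt_eq_eval, ← charPolyAt_eq_eval,
        charPolyAt_totalCorona G₁ H hreg₁ α x ht hK, charPolyAt_totalCorona G₂ H hreg₂ α x ht hK,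
        det_aeval_eq_of_charpoly_eq _ _ hchar, hn₁, hn₂, hE]
  intro x
  rw [charPolyAt_eq_eval, charPolyAt_eq_eval, hpoly]

end AalphaSpectra
end
end

section
/- Let G₁ be an r₁-regular graph on n₁ vertices and G₂ an arbitrary graph on n₂ vertices, let α ∈ [0,1], and let λ be a real number such that (λ−α)I_{n₂} − A_α(G₂) is invertible. Then φ(A_α(G₁ ⊠ G₂), λ) = ∏_{i=1}^{n₂}(λ − α − λ_i(A_α(G₂)))^{n₁} · ∏_{i=1}^{n₁}[ (λ − 2αr₁ − (1−α)λ_i(A(G₁)))·(λ − (r₁+n₂)α − (1−α)²Γ_{A_α(G₂)}(λ−α)) − (1−α)²λ_i(A(G₁))² ]. -/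
/-!
Ordering the vertices of `G₁ ⊠ G₂` as `V(G₁)`, `U(G₁)`, copies of `G₂`, regularity of `G₁` makes
`λI − A_α(G₁ ⊠ G₂)` the block matrix of `smul_one_sub_AMat_eq`, whose last diagonal block is
`I ⊗ M` with `M = (λ − α)I − A_α(G₂)` invertible. Its Schur complement only changes the
`U(G₁)`-block, by the scalar matrix `(1 − α)² Γ · I`, because sandwiching `I ⊗ M⁻¹` between the
joining blocks sums all entries of `M⁻¹` (`joinBlock_mul_kronecker_mul`). The determinant is thus
`det(M)^{n₁}` times that of a 2 × 2 block matrix with blocks in the algebra generated by the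
symmetric matrix `A(G₁)`. Diagonalizing `A(G₁)` orthogonally turns it into a direct sum of
2 × 2 matrices, one per eigenvalue (`det_fromBlocks_hermitian`); this needs no invertibility of the
`U(G₁)`-block. The prescribed list `f` has the same multiset of values as the eigenvalues because
both factor the characteristic polynomial (`prod_eigenvalues_eq`).
-/

open Matrix BigOperators

attribute [local instance] Classical.propDecidable

noncomputable section

namespace AalphaSpectra

/-- The splitting add vertex corona `G₁ ⊠ G₂`: take the splitting graph `Spl(G₁)`
(original vertices `Sum.inl (Sum.inl v)`, added vertices `Sum.inl (Sum.inr u)`)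
together with one copy of `G₂` for each vertex of `G₁`, and join every vertex of
the `i`-th copy of `G₂` to the added vertex `uᵢ ∈ U(G₁)`. -/
def splitAddVertexCorona {V₁ V₂ : Type*} (G₁ : SimpleGraph V₁) (G₂ : SimpleGraph V₂) :
    SimpleGraph ((V₁ ⊕ V₁) ⊕ V₁ × V₂) :=
  SimpleGraph.fromRel fun a b =>
    match a, b with
    | Sum.inl (Sum.inl v), Sum.inl (Sum.inl w) => G₁.Adj v w
    | Sum.inl (Sum.inl v), Sum.inl (Sum.inr u) => G₁.Adj v u
    | Sum.inl (Sum.inr u), Sum.inr p => u = p.1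
    | Sum.inr p, Sum.inr q => p.1 = q.1 ∧ G₂.Adj p.2 q.2
    | _, _ => False

theorem charPolyAt_eq {n : Type*} [Fintype n] [DecidableEq n] (M : Matrix n n ℝ) (x : ℝ) :
    charPolyAt M x = (x • (1 : Matrix n n ℝ) - M).det := by
  rw [charPolyAt]
  congr!

/-! ### Determinants and eigenvalues -/

section LinearAlgebra

variable {n : Type*} [Fintype n] [DecidableEq n]

/-- Interleaving the two halves of the index set makes the matrix block diagonal with
`2 × 2` blocks. -/
theorem det_fromBlocks_diagonal (a b c d : n → ℝ) :
    (fromBlocks (diagonal a) (diagonal b) (diagonal c) (diagonal d)).det =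
      ∏ i, (a i * d i - b i * c i) := by
  let e : Fin 2 × n ≃ n ⊕ n :=
    (Equiv.prodCongr finTwoEquiv (Equiv.refl n)).trans (Equiv.boolProdEquivSum n)
  rw [← det_submatrix_equiv_self e]
  have h : (fromBlocks (diagonal a) (diagonal b) (diagonal c) (diagonal d)).submatrix e e =
      blockDiagonal fun i => !![a i, b i; c i, d i] := by
    ext ⟨x, i⟩ ⟨y, j⟩
    by_cases hij : i = j
    · subst hij
      fin_cases x <;> fin_cases y <;> simp [e, finTwoEquiv, Equiv.boolProdEquivSum]
    · fin_cases x <;> fin_cases y <;>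
        simp [e, finTwoEquiv, Equiv.boolProdEquivSum, blockDiagonal_apply, hij]
  rw [h, det_blockDiagonal]
  simp [det_fin_two]

/-- The orthogonal matrix diagonalizing `A` diagonalizes all four blocks at once. -/
theorem det_fromBlocks_hermitian {A : Matrix n n ℝ} (hA : A.IsHermitian) (p q c s : ℝ) :
    (fromBlocks (p • 1 + q • A) (c • A) (c • A) (s • (1 : Matrix n n ℝ))).det =
      ∏ i, ((p + q * hA.eigenvalues i) * s -
        (c * hA.eigenvalues i) * (c * hA.eigenvalues i)) := by
  set U : Matrix n n ℝ := (hA.eigenvectorUnitary : Matrix n n ℝ) with hU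
  have hUU : U * star U = 1 := Unitary.coe_mul_star_self hA.eigenvectorUnitary
  have hspec : A = U * diagonal hA.eigenvalues * star U := by
    have := hA.spectral_theorem
    rw [Unitary.conjStarAlgAut_apply] at this
    exact this
  have key : ∀ x y : ℝ, x • (1 : Matrix n n ℝ) + y • A =
      U * diagonal (fun i => x + y * hA.eigenvalues i) * star U := by
    intro x y
    have h1 : diagonal (fun i => x + y * hA.eigenvalues i) =
        x • (1 : Matrix n n ℝ) + y • diagonal hA.eigenvalues := by
      ext i j
      by_cases hij : i = j
      · subst hij; simp
      · simp [hij]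
    conv_lhs => rw [hspec]
    rw [h1, Matrix.mul_add, Matrix.add_mul]
    simp [hUU]
  have k2 : c • A = U * diagonal (fun i => c * hA.eigenvalues i) * star U := by
    simpa using key 0 c
  have k3 : s • (1 : Matrix n n ℝ) = U * diagonal (fun _ => s) * star U := by
    simpa using key s 0
  have hfac : fromBlocks (p • 1 + q • A) (c • A) (c • A) (s • (1 : Matrix n n ℝ)) =
      fromBlocks U 0 0 U *
        fromBlocks (diagonal fun i => p + q * hA.eigenvalues i)
          (diagonal fun i => c * hA.eigenvalues i)
          (diagonal fun i => c * hA.eigenvalues i) (diagonal fun _ => s) *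
        fromBlocks (star U) 0 0 (star U) := by
    rw [key, k2, k3]
    simp [fromBlocks_multiply]
  have hdet : (fromBlocks U 0 0 U).det * (fromBlocks (star U) 0 0 (star U)).det = 1 := by
    rw [← det_mul, fromBlocks_multiply]
    simp [hUU]
  rw [hfac, det_mul, det_mul, mul_right_comm, hdet, one_mul, det_fromBlocks_diagonal]

/-- The list of roots of a factored characteristic polynomial is, up to order, the list of
eigenvalues, so products of a function over the two lists agree. -/
theorem prod_eigenvalues_eq {A : Matrix n n ℝ} (hA : A.IsHermitian) {m : ℕ} (f : Fin m → ℝ)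
    (hf : ∀ x : ℝ, (x • (1 : Matrix n n ℝ) - A).det = ∏ i, (x - f i)) (h : ℝ → ℝ) :
    ∏ i, h (hA.eigenvalues i) = ∏ i, h (f i) := by
  have hpoly : A.charpoly = ∏ i, (Polynomial.X - Polynomial.C (f i)) := by
    apply Polynomial.funext
    intro x
    rw [eval_charpoly, Polynomial.eval_prod]
    simp only [Polynomial.eval_sub, Polynomial.eval_X, Polynomial.eval_C]
    rw [← hf x, smul_one_eq_diagonal]
    rfl
  have hroots := hA.roots_charpoly_eq_eigenvalues
  rw [hpoly, Polynomial.roots_prod _ _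
    (Finset.prod_ne_zero_iff.2 fun i _ => Polynomial.X_sub_C_ne_zero _)] at hroots
  simp only [Polynomial.roots_X_sub_C, Multiset.bind_singleton] at hroots
  have := congrArg (fun s => (Multiset.map h s).prod) hroots
  simp only [Multiset.map_map] at this
  exact this.symm

/-- Schur complement with the inverse of the lower right block given explicitly. -/
theorem det_fromBlocks_of_mul_eq_one {m : Type*} [Fintype m] [DecidableEq m]
    (A : Matrix m m ℝ) (B : Matrix m n ℝ) (C : Matrix n m ℝ) (D D' : Matrix n n ℝ)
    (h : D * D' = 1) :
    (fromBlocks A B C D).det = D.det * (A - B * D' * C).det := by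
  let _ : Invertible D := invertibleOfRightInverse D D' h
  rw [det_fromBlocks₂₂, invOf_eq_right_inv h]

end LinearAlgebra

open scoped Kronecker

/-! ### Adjacency and degrees in `G₁ ⊠ G₂` -/

section Graph

variable {V₁ V₂ : Type*} (G₁ : SimpleGraph V₁) (G₂ : SimpleGraph V₂)

/- In the names below `v`, `u`, `p` stand for vertices in `V(G₁)`, in `U(G₁)` and in the copies of
`G₂`, respectively. -/

theorem adj_vv (v w : V₁) : (splitAddVertexCorona G₁ G₂).Adj (.inl (.inl v)) (.inl (.inl w)) ↔
    G₁.Adj v w := by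
  simp only [splitAddVertexCorona, SimpleGraph.fromRel_adj, G₁.adj_comm w v, or_self]
  exact ⟨And.right, fun h => ⟨by simpa using h.ne, h⟩⟩

theorem adj_vu (v w : V₁) : (splitAddVertexCorona G₁ G₂).Adj (.inl (.inl v)) (.inl (.inr w)) ↔
    G₁.Adj v w := by
  simp [splitAddVertexCorona, SimpleGraph.fromRel_adj]

theorem adj_uv (v w : V₁) : (splitAddVertexCorona G₁ G₂).Adj (.inl (.inr v)) (.inl (.inl w)) ↔
    G₁.Adj v w := by
  simp [splitAddVertexCorona, SimpleGraph.fromRel_adj, G₁.adj_comm]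

theorem adj_uu (v w : V₁) : ¬ (splitAddVertexCorona G₁ G₂).Adj (.inl (.inr v)) (.inl (.inr w)) := by
  simp [splitAddVertexCorona, SimpleGraph.fromRel_adj]

theorem adj_vp (v : V₁) (p : V₁ × V₂) :
    ¬ (splitAddVertexCorona G₁ G₂).Adj (.inl (.inl v)) (.inr p) := by
  simp [splitAddVertexCorona, SimpleGraph.fromRel_adj]

theorem adj_pv (v : V₁) (p : V₁ × V₂) :
    ¬ (splitAddVertexCorona G₁ G₂).Adj (.inr p) (.inl (.inl v)) := by
  simp [splitAddVertexCorona, SimpleGraph.fromRel_adj]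

theorem adj_up (u : V₁) (p : V₁ × V₂) :
    (splitAddVertexCorona G₁ G₂).Adj (.inl (.inr u)) (.inr p) ↔ u = p.1 := by
  simp [splitAddVertexCorona, SimpleGraph.fromRel_adj]

theorem adj_pu (u : V₁) (p : V₁ × V₂) :
    (splitAddVertexCorona G₁ G₂).Adj (.inr p) (.inl (.inr u)) ↔ u = p.1 := by
  simp [splitAddVertexCorona, SimpleGraph.fromRel_adj]

theorem adj_pp (p q : V₁ × V₂) :
    (splitAddVertexCorona G₁ G₂).Adj (.inr p) (.inr q) ↔ p.1 = q.1 ∧ G₂.Adj p.2 q.2 := by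
  simp only [splitAddVertexCorona, SimpleGraph.fromRel_adj, G₂.adj_comm q.2 p.2,
    eq_comm (a := q.1), or_self]
  refine ⟨And.right, fun h => ⟨?_, h⟩⟩
  intro hpq
  obtain rfl := Sum.inr_injective hpq
  exact h.2.ne rfl

theorem degree_v [Finite V₁] (v : V₁) :
    ((splitAddVertexCorona G₁ G₂).neighborSet (.inl (.inl v))).ncard =
      (G₁.neighborSet v).ncard + (G₁.neighborSet v).ncard := by
  have h : (splitAddVertexCorona G₁ G₂).neighborSet (.inl (.inl v)) =
      (fun w => .inl (.inl w)) '' G₁.neighborSet v ∪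
        (fun w => .inl (.inr w)) '' G₁.neighborSet v := by
    ext ((w | w) | p) <;> simp [adj_vv, adj_vu, adj_vp]
  rw [h, Set.ncard_union_eq _ (Set.toFinite _) (Set.toFinite _),
    Set.ncard_image_of_injective _ fun a b => by simp,
    Set.ncard_image_of_injective _ fun a b => by simp]
  rw [Set.disjoint_left]
  rintro _ ⟨a, -, rfl⟩ ⟨b, -, hb⟩
  simp at hb

theorem degree_u [Finite V₁] [Fintype V₂] (u : V₁) :
    ((splitAddVertexCorona G₁ G₂).neighborSet (.inl (.inr u))).ncard =
      (G₁.neighborSet u).ncard + Fintype.card V₂ := by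
  have h : (splitAddVertexCorona G₁ G₂).neighborSet (.inl (.inr u)) =
      (fun w => .inl (.inl w)) '' G₁.neighborSet u ∪
        (fun j => .inr (u, j)) '' (Set.univ : Set V₂) := by
    ext ((w | w) | ⟨i, j⟩) <;> simp [adj_uv, adj_uu, adj_up]
  rw [h, Set.ncard_union_eq _ (Set.toFinite _) (Set.toFinite _),
    Set.ncard_image_of_injective _ fun a b => by simp,
    Set.ncard_image_of_injective _ fun a b => by simp, Set.ncard_univ, Nat.card_eq_fintype_card]
  rw [Set.disjoint_left]
  rintro _ ⟨a, -, rfl⟩ ⟨b, -, hb⟩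
  simp at hb

theorem degree_p [Finite V₂] (p : V₁ × V₂) :
    ((splitAddVertexCorona G₁ G₂).neighborSet (.inr p)).ncard =
      (G₂.neighborSet p.2).ncard + 1 := by
  obtain ⟨i, j⟩ := p
  have h : (splitAddVertexCorona G₁ G₂).neighborSet (.inr (i, j)) =
      insert (.inl (.inr i)) ((fun k => .inr (i, k)) '' G₂.neighborSet j) := by
    ext ((w | w) | ⟨i, j⟩) <;> simp [adj_pv, adj_pu, adj_pp, and_comm]
  rw [h, Set.ncard_insert_of_notMem (by simp) (Set.toFinite _),
    Set.ncard_image_of_injective _ fun a b => by simp]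

end Graph

/-! ### The block decomposition -/

theorem adjMat_isHermitian {V : Type*} [Fintype V] (G : SimpleGraph V) :
    (adjMat G).IsHermitian := by
  ext i j
  simp [adjMat, G.adj_comm]

/-- The block joining `U(G₁)` to the copies of `G₂`: the entry at `(uᵢ, (k, j))` is `c` if `i = k`
and all other entries vanish. -/
def joinBlock (V₁ V₂ : Type*) (c : ℝ) : Matrix (V₁ ⊕ V₁) (V₁ × V₂) ℝ :=
  Matrix.of fun x p => Sum.elim (fun _ => 0) (fun u => if u = p.1 then c else 0) x

/-- Block form of `λI − A_α(G₁ ⊠ G₂)` for regular `G₁`. -/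
theorem smul_one_sub_AMat_eq {V₁ V₂ : Type*} [Fintype V₁] [Fintype V₂]
    [DecidableEq V₁] [DecidableEq V₂] [DecidableEq ((V₁ ⊕ V₁) ⊕ V₁ × V₂)]
    (G₁ : SimpleGraph V₁) (G₂ : SimpleGraph V₂) (r₁ : ℕ) (hreg₁ : IsRegularOfDeg G₁ r₁)
    (α lam : ℝ) :
    lam • (1 : Matrix ((V₁ ⊕ V₁) ⊕ V₁ × V₂) ((V₁ ⊕ V₁) ⊕ V₁ × V₂) ℝ) -
        AMat (splitAddVertexCorona G₁ G₂) α =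
      fromBlocks
        (fromBlocks ((lam - 2 * α * r₁) • 1 + (-(1 - α)) • adjMat G₁) ((-(1 - α)) • adjMat G₁)
          ((-(1 - α)) • adjMat G₁) ((lam - (r₁ + Fintype.card V₂) * α) • 1))
        (joinBlock V₁ V₂ (-(1 - α))) (joinBlock V₁ V₂ (-(1 - α)))ᵀ
        ((1 : Matrix V₁ V₁ ℝ) ⊗ₖ ((lam - α) • (1 : Matrix V₂ V₂ ℝ) - AMat G₂ α)) := by
  ext ((v | v) | ⟨i, j⟩) ((w | w) | ⟨k, l⟩)
  · by_cases h : v = w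
    · subst h
      simp [AMat, degMat, adjMat, degree_v, hreg₁ v]
      ring
    · by_cases h' : G₁.Adj v w <;> simp [AMat, degMat, adjMat, adj_vv, h, h']
  · by_cases h' : G₁.Adj v w <;> simp [AMat, degMat, adjMat, adj_vu, h']
  · simp [AMat, degMat, adjMat, adj_vp, joinBlock]
  · by_cases h' : G₁.Adj v w <;> simp [AMat, degMat, adjMat, adj_uv, h']
  · by_cases h : v = w
    · subst h
      simp [AMat, degMat, adjMat, degree_u, hreg₁ v]
      ring
    · simp [AMat, degMat, adjMat, adj_uu, h]
  · by_cases h : v = k <;> simp [AMat, degMat, adjMat, adj_up, joinBlock, h]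
  · simp [AMat, degMat, adjMat, adj_pv, joinBlock]
  · by_cases h : w = i <;> simp [AMat, degMat, adjMat, adj_pu, joinBlock, h]
  · by_cases h : i = k
    · subst h
      by_cases h' : j = l
      · subst h'
        simp [AMat, degMat, adjMat, degree_p, kroneckerMap_apply]
        ring
      · simp [AMat, degMat, adjMat, adj_pp, kroneckerMap_apply, h']
    · simp [AMat, degMat, adjMat, adj_pp, kroneckerMap_apply, h]

/-- Each `uᵢ` sees exactly the `i`-th copy of `N`, so only the sum of the entries of `N` remains;
for `N = M⁻¹` this is the coronal. -/
theorem joinBlock_mul_kronecker_mul {V₁ V₂ : Type*} [Fintype V₁] [Fintype V₂]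
    [DecidableEq V₁] (c : ℝ) (N : Matrix V₂ V₂ ℝ) :
    joinBlock V₁ V₂ c * ((1 : Matrix V₁ V₁ ℝ) ⊗ₖ N) * (joinBlock V₁ V₂ c)ᵀ =
      fromBlocks 0 0 0 ((c ^ 2 * ∑ i, ∑ j, N i j) • 1) := by
  ext (v | v) (w | w)
  · simp [Matrix.mul_apply, joinBlock]
  · simp [Matrix.mul_apply, joinBlock]
  · simp [Matrix.mul_apply, joinBlock]
  · by_cases h : v = w
    · subst h
      simp [Matrix.mul_apply, joinBlock, Fintype.sum_prod_type, one_apply, Finset.mul_sum,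
        Finset.sum_mul]
      rw [Finset.sum_comm]
      refine Finset.sum_congr rfl fun _ _ => Finset.sum_congr rfl fun _ _ => by ring
    · simp [Matrix.mul_apply, joinBlock, Fintype.sum_prod_type, one_apply, h]

theorem charPolyAt_splitAddVertexCorona
    {V₁ V₂ : Type*} [Fintype V₁] [Fintype V₂]
    (G₁ : SimpleGraph V₁) (G₂ : SimpleGraph V₂)
    (n₁ n₂ r₁ : ℕ)
    (hn₁ : Fintype.card V₁ = n₁) (hn₂ : Fintype.card V₂ = n₂)
    (hreg₁ : IsRegularOfDeg G₁ r₁)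
    (α : ℝ) (hα : α ∈ Set.Icc (0 : ℝ) 1)
    (f : Fin n₁ → ℝ) (hfa : Antitone f)
    (hf : ∀ x : ℝ, charPolyAt (adjMat G₁) x = ∏ i, (x - f i))
    (g : Fin n₂ → ℝ) (hga : Antitone g)
    (hg : ∀ x : ℝ, charPolyAt (AMat G₂ α) x = ∏ i, (x - g i))
    (lam : ℝ)
    (hinv : IsUnit ((lam - α) • (1 : Matrix V₂ V₂ ℝ) - AMat G₂ α)) :
    charPolyAt (AMat (splitAddVertexCorona G₁ G₂) α) lam =
      (∏ i, (lam - α - g i) ^ n₁) *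
        ∏ i,
          ((lam - 2 * α * (r₁ : ℝ) - (1 - α) * f i) *
              (lam - ((r₁ : ℝ) + (n₂ : ℝ)) * α -
                (1 - α) ^ 2 * coronal (AMat G₂ α) (lam - α)) -
            (1 - α) ^ 2 * (f i) ^ 2) := by
  have hH := adjMat_isHermitian G₁
  set M := (lam - α) • (1 : Matrix V₂ V₂ ℝ) - AMat G₂ α with hM
  have hdetM : M.det = ∏ i, (lam - α - g i) := by
    rw [← hg, charPolyAt_eq, hM]
  have hcor : coronal (AMat G₂ α) (lam - α) = ∑ i, ∑ j, M⁻¹ i j := by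
    rw [coronal, hM]
  have hMinv : M * M⁻¹ = 1 := mul_nonsing_inv M ((isUnit_iff_isUnit_det M).1 hinv)
  have hD : ((1 : Matrix V₁ V₁ ℝ) ⊗ₖ M) * ((1 : Matrix V₁ V₁ ℝ) ⊗ₖ M⁻¹) = 1 := by
    rw [← mul_kronecker_mul, hMinv, Matrix.one_mul, one_kronecker_one]
  have hf' : ∀ x : ℝ, (x • (1 : Matrix V₁ V₁ ℝ) - adjMat G₁).det = ∏ i, (x - f i) := by
    intro x
    rw [← hf, charPolyAt_eq]
  rw [charPolyAt_eq, smul_one_sub_AMat_eq G₁ G₂ r₁ hreg₁, ← hM]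
  rw [← prod_eigenvalues_eq hH f hf' (fun t => (lam - 2 * α * (r₁ : ℝ) - (1 - α) * t) *
    (lam - ((r₁ : ℝ) + (n₂ : ℝ)) * α - (1 - α) ^ 2 * coronal (AMat G₂ α) (lam - α)) -
      (1 - α) ^ 2 * t ^ 2)]
  have hschur := det_fromBlocks_of_mul_eq_one
    (fromBlocks ((lam - 2 * α * r₁) • 1 + (-(1 - α)) • adjMat G₁) ((-(1 - α)) • adjMat G₁)
      ((-(1 - α)) • adjMat G₁) ((lam - (r₁ + Fintype.card V₂) * α) • 1))
    (joinBlock V₁ V₂ (-(1 - α))) (joinBlock V₁ V₂ (-(1 - α)))ᵀ _ _ hD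
  rw [joinBlock_mul_kronecker_mul, ← hcor, sub_eq_add_neg (fromBlocks _ _ _ _),
    fromBlocks_neg, fromBlocks_add, neg_zero, add_zero, add_zero, ← sub_eq_add_neg,
    ← sub_smul, det_fromBlocks_hermitian hH, det_kronecker, det_one, one_pow, one_mul, hdetM,
    hn₁, ← Finset.prod_pow, hn₂] at hschur
  rw [hn₂]
  refine hschur.trans ?_
  congr 1
  refine Finset.prod_congr rfl fun i _ => ?_
  ring

end AalphaSpectra
end
end
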